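/- Suppose (x, X, y, Y₁₂, α) lacks only (P4a) and α₁ = 0. Then X₁₁ > 0 and y₂ − Y₁₂ > 0, and for any α̂₂ ∈ ℝ, the point (x, X, y, Y₁₂, (0, α̂₂)) satisfies (P4a) if and only if α₂⁻ ≤ α̂₂ ≤ α₂⁺. -/

import Mathlib

open Matrix

/-- Linear conditions (L). -/
def Lcond (x1 x2 X11 X12 X22 y1 y2 Y12 a1 a2 : ℝ) : Prop :=
  X11 ≤ x1 ∧ x1 ≤ y1 ∧ X22 ≤ x2 ∧ x2 ≤ y2 ∧
  max 0 (x1 - a1 + x2 - a2 - Y12) ≤ X12 ∧ X12 ≤ min (x1 - a1) (x2 - a2) ∧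
  0 ≤ a1 ∧ a1 ≤ y1 - Y12 ∧ 0 ≤ a2 ∧ a2 ≤ y2 - Y12 ∧
  max 0 (y1 + y2 - 1) ≤ Y12 ∧ Y12 ≤ min y1 y2

/-- PSD condition (P3). -/
def P3cond (x1 x2 X11 X12 X22 y1 y2 Y12 a1 a2 : ℝ) : Prop :=
  (!![Y12, x1 - a1, x2 - a2;
      x1 - a1, x1 - a1, X12;
      x2 - a2, X12, x2 - a2] : Matrix (Fin 3) (Fin 3) ℝ).PosSemidef

/-- PSD condition (P4a). -/
def P4acond (x1 x2 X11 X12 X22 y1 y2 Y12 a1 a2 : ℝ) : Prop :=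
  (!![y1 - Y12, 0, a1, 0;
      0, Y12, x1 - a1, x2 - a2;
      a1, x1 - a1, X11, X12;
      0, x2 - a2, X12, x2 - a2] : Matrix (Fin 4) (Fin 4) ℝ).PosSemidef

/-- PSD condition (P4b). -/
def P4bcond (x1 x2 X11 X12 X22 y1 y2 Y12 a1 a2 : ℝ) : Prop :=
  (!![y2 - Y12, 0, 0, a2;
      0, Y12, x1 - a1, x2 - a2;
      0, x1 - a1, x1 - a1, X12;
      a2, x2 - a2, X12, X22] : Matrix (Fin 4) (Fin 4) ℝ).PosSemidef

/-- PSD condition (P5). -/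
def P5cond (x1 x2 X11 X12 X22 y1 y2 Y12 a1 a2 : ℝ) : Prop :=
  (!![y1 - Y12, 0, 0, a1, 0;
      0, y2 - Y12, 0, 0, a2;
      0, 0, Y12, x1 - a1, x2 - a2;
      a1, 0, x1 - a1, X11, X12;
      0, a2, x2 - a2, X12, X22] : Matrix (Fin 5) (Fin 5) ℝ).PosSemidef

/-- (x, X, y, Y₁₂, α) lacks only (P4a): it satisfies (L), (P3), (P4b), (P5)
but violates (P4a). -/
def LacksOnlyP4a (x1 x2 X11 X12 X22 y1 y2 Y12 a1 a2 : ℝ) : Prop :=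
  Lcond x1 x2 X11 X12 X22 y1 y2 Y12 a1 a2 ∧
  P3cond x1 x2 X11 X12 X22 y1 y2 Y12 a1 a2 ∧
  P4bcond x1 x2 X11 X12 X22 y1 y2 Y12 a1 a2 ∧
  P5cond x1 x2 X11 X12 X22 y1 y2 Y12 a1 a2 ∧
  ¬ P4acond x1 x2 X11 X12 X22 y1 y2 Y12 a1 a2

/-- α₂⁻ = x₂ − X₁₂x₁/X₁₁ − (θ + √Δ)/(2X₁₁), where θ = Y₁₂X₁₁ − x₁² and
Δ = θ(θ + 4X₁₂(x₁ − X₁₂)). -/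
noncomputable def alpha2minus (x1 x2 X11 X12 Y12 : ℝ) : ℝ :=
  x2 - X12 * x1 / X11 -
    ((Y12 * X11 - x1 ^ 2) +
      Real.sqrt ((Y12 * X11 - x1 ^ 2) *
        ((Y12 * X11 - x1 ^ 2) + 4 * X12 * (x1 - X12)))) / (2 * X11)

/-- α₂⁺ = x₂ − X₁₂x₁/X₁₁ − (θ − √Δ)/(2X₁₁), where θ = Y₁₂X₁₁ − x₁² and
Δ = θ(θ + 4X₁₂(x₁ − X₁₂)). -/
noncomputable def alpha2plus (x1 x2 X11 X12 Y12 : ℝ) : ℝ :=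
  x2 - X12 * x1 / X11 -
    ((Y12 * X11 - x1 ^ 2) -
      Real.sqrt ((Y12 * X11 - x1 ^ 2) *
        ((Y12 * X11 - x1 ^ 2) + 4 * X12 * (x1 - X12)))) / (2 * X11)

/-!
At `α₁ = 0` the matrix of (P4a) splits off the entry `y₁ - Y₁₂`, leaving a `3 × 3` block that
depends on `α₂` only through `t = x₂ - α₂`. When `X₁₁ > 0`, a Schur complement at `X₁₁` turns
positive semidefiniteness of this block into `u² ≤ θ (u + k)`, where `u = X₁₁ t - x₁ X₁₂`,
`θ = Y₁₂ X₁₁ - x₁²` and `k = X₁₂ (x₁ - X₁₂) ≥ 0`. This quadratic in `u` has discriminant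
`Δ = θ (θ + 4 k)`, so its solution set is the interval from `α₂⁻` to `α₂⁺`.

If `X₁₁ = 0`, then (P5) forces `x₁ = 0`, and the block is a permutation of the matrix of (P3).
If `y₂ = Y₁₂`, then `α₂ = 0`, and the block dominates a principal submatrix of the matrix of (P5),
because `X₂₂ ≤ x₂`. Either way (P4a) would hold.
-/

theorem sq_apply_le_of_posSemidef {n : Type*} {A : Matrix n n ℝ} (hA : A.PosSemidef) (i j : n) :
    A i j ^ 2 ≤ A i i * A j j := by
  have hdet := (hA.submatrix ![i, j]).det_nonneg
  have hsymm : A j i = A i j := hA.isHermitian.apply i j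
  simp only [det_fin_two, submatrix_apply, cons_val_zero, cons_val_one, hsymm] at hdet
  linarith

theorem posSemidef_fin_two_iff {a b c : ℝ} :
    !![a, b; b, c].PosSemidef ↔ 0 ≤ a ∧ 0 ≤ c ∧ b ^ 2 ≤ a * c := by
  constructor
  · intro h
    exact ⟨h.diag_nonneg (i := 0), h.diag_nonneg (i := 1), sq_apply_le_of_posSemidef h 0 1⟩
  · rintro ⟨ha, hc, hb⟩
    refine .of_dotProduct_mulVec_nonneg
      (IsHermitian.ext fun i j ↦ by fin_cases i <;> fin_cases j <;> rfl) fun v ↦ ?_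
    have hform : star v ⬝ᵥ (!![a, b; b, c] *ᵥ v) =
        a * v 0 ^ 2 + 2 * b * v 0 * v 1 + c * v 1 ^ 2 := by
      simp only [star_trivial, dotProduct, mulVec, Fin.sum_univ_two, of_apply, cons_val_zero,
        cons_val_one]
      ring
    rw [hform]
    rcases ha.eq_or_lt with rfl | ha
    · obtain rfl : b = 0 := by simpa using hb
      simpa using mul_nonneg hc (sq_nonneg (v 1))
    · refine (mul_nonneg_iff_of_pos_left ha).1 ?_
      linear_combination sq_nonneg (a * v 0 + b * v 1) + v 1 ^ 2 * hb

theorem posSemidef_fin_three_iff_of_pos {a b c d e f : ℝ} (ha : 0 < a) :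
    !![a, b, c; b, d, e; c, e, f].PosSemidef ↔
      0 ≤ a * d - b ^ 2 ∧ 0 ≤ a * f - c ^ 2 ∧
        (a * e - b * c) ^ 2 ≤ (a * d - b ^ 2) * (a * f - c ^ 2) := by
  have hA : (diagonal fun _ : Fin 1 ↦ a).PosDef := .diagonal fun _ ↦ ha
  have := hA.isUnit.invertible
  let σ : Fin 1 ⊕ Fin 2 ≃ Fin 3 := finSumFinEquiv
  have hblocks : !![a, b, c; b, d, e; c, e, f].submatrix σ σ =
      fromBlocks (diagonal fun _ ↦ a) !![b, c] !![b, c]ᴴ !![d, e; e, f] := by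
    ext (i | i) (j | j) <;> fin_cases i <;> fin_cases j <;> rfl
  have hschur : !![d, e; e, f] - !![b, c]ᴴ * (diagonal fun _ : Fin 1 ↦ a)⁻¹ * !![b, c] =
      !![(a * d - b ^ 2) / a, (a * e - b * c) / a;
        (a * e - b * c) / a, (a * f - c ^ 2) / a] := by
    ext i j
    fin_cases i <;> fin_cases j <;> simp [mul_apply] <;> field_simp
  rw [← posSemidef_submatrix_equiv σ, hblocks, PosDef.fromBlocks₁₁ _ _ hA, hschur,
    posSemidef_fin_two_iff, le_div_iff₀ ha, le_div_iff₀ ha, zero_mul, div_pow, div_mul_div_comm,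
    ← sq a, div_le_div_iff_of_pos_right (pow_pos ha 2)]

theorem posSemidef_fromBlocks_zero_iff {R m n : Type*} [Ring R] [PartialOrder R] [StarRing R]
    [AddLeftMono R] [Finite m] [Finite n] {A : Matrix m m R} {D : Matrix n n R} :
    (fromBlocks A 0 0 D).PosSemidef ↔ A.PosSemidef ∧ D.PosSemidef := by
  refine ⟨fun h ↦ ⟨h.submatrix Sum.inl, h.submatrix Sum.inr⟩, fun ⟨hA, hD⟩ ↦ ?_⟩
  have := Fintype.ofFinite m
  have := Fintype.ofFinite n
  refine .of_dotProduct_mulVec_nonneg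
    (hA.isHermitian.fromBlocks (by simp) hD.isHermitian) fun v ↦ ?_
  rw [← Sum.elim_comp_inl_inr v, fromBlocks_mulVec, Function.star_sumElim,
    sumElim_dotProduct_sumElim]
  simpa using add_nonneg (hA.dotProduct_mulVec_nonneg (v ∘ Sum.inl))
    (hD.dotProduct_mulVec_nonneg (v ∘ Sum.inr))

theorem sq_le_mul_add_iff_abs_le_sqrt {θ k u : ℝ} (h : 0 ≤ θ * (θ + 4 * k)) :
    u ^ 2 ≤ θ * (u + k) ↔ |2 * u - θ| ≤ √(θ * (θ + 4 * k)) := by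
  have hsquare : (2 * u - θ) ^ 2 - θ * (θ + 4 * k) = 4 * (u ^ 2 - θ * (u + k)) := by ring
  rw [abs_le, ← Real.sq_le h]
  constructor <;> intro hu <;> linarith only [hsquare, hu]

theorem alpha2minus_le_and_le_alpha2plus_iff {x1 x2 X11 X12 Y12 b : ℝ} (hX : 0 < X11) :
    alpha2minus x1 x2 X11 X12 Y12 ≤ b ∧ b ≤ alpha2plus x1 x2 X11 X12 Y12 ↔
      |2 * (X11 * (x2 - b) - x1 * X12) - (Y12 * X11 - x1 ^ 2)| ≤
        √((Y12 * X11 - x1 ^ 2) * (Y12 * X11 - x1 ^ 2 + 4 * (X12 * (x1 - X12)))) := by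
  rw [alpha2minus, alpha2plus, mul_assoc 4, abs_le, and_comm]
  generalize √_ = s
  field_simp
  constructor <;> rintro ⟨h₁, h₂⟩ <;> constructor <;> linarith

/-- The principal submatrix of the (P4a) matrix at `α₁ = 0` that decides (P4a), with the row of
`X₁₁` moved to the front to serve as Schur pivot. Here `t` stands for `x₂ - α₂`; the last diagonal
entry is a separate parameter `s`, so that the matrices of (P3) and (P5) contain instances too. -/
def pivotBlock (x1 X11 X12 Y12 t s : ℝ) : Matrix (Fin 3) (Fin 3) ℝ :=
  !![X11, x1, X12; x1, Y12, t; X12, t, s]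

section

variable {x1 X11 X12 Y12 t s : ℝ}

theorem posSemidef_pivotBlock_mono {s' : ℝ} (hs : s ≤ s')
    (h : (pivotBlock x1 X11 X12 Y12 t s).PosSemidef) :
    (pivotBlock x1 X11 X12 Y12 t s').PosSemidef := by
  have hdiag : (diagonal ![0, 0, s' - s]).PosSemidef :=
    .diagonal fun i ↦ by fin_cases i <;> simp [hs]
  convert h.add hdiag using 1
  ext i j
  fin_cases i <;> fin_cases j <;> simp [pivotBlock]

theorem sq_le_of_posSemidef_pivotBlock (h : (pivotBlock x1 X11 X12 Y12 t s).PosSemidef) :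
    x1 ^ 2 ≤ Y12 * X11 := by
  rw [mul_comm]
  exact sq_apply_le_of_posSemidef h 0 1

theorem posSemidef_pivotBlock_iff_sq_le (hX : 0 < X11) (hθ : 0 ≤ Y12 * X11 - x1 ^ 2)
    (hk : 0 ≤ X12 * (x1 - X12)) :
    (pivotBlock x1 X11 X12 Y12 t t).PosSemidef ↔
      (X11 * t - x1 * X12) ^ 2 ≤
        (Y12 * X11 - x1 ^ 2) * (X11 * t - x1 * X12 + X12 * (x1 - X12)) := by
  have hminor : X11 * t - x1 * X12 + X12 * (x1 - X12) = X11 * t - X12 ^ 2 := by ring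
  rw [pivotBlock, posSemidef_fin_three_iff_of_pos hX, mul_comm X11 Y12, ← hminor,
    and_iff_right hθ, and_iff_right_iff_imp]
  intro hsq
  rcases hθ.eq_or_lt with hθ0 | hθ0
  · have hu : X11 * t - x1 * X12 = 0 := by simpa [← hθ0] using hsq
    rwa [hu, zero_add]
  · exact nonneg_of_mul_nonneg_right ((sq_nonneg _).trans hsq) hθ0

end

section

variable {x1 x2 X11 X12 X22 y1 y2 Y12 a2 : ℝ}

theorem p4acond_zero_iff :
    P4acond x1 x2 X11 X12 X22 y1 y2 Y12 0 a2 ↔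
      0 ≤ y1 - Y12 ∧ (pivotBlock x1 X11 X12 Y12 (x2 - a2) (x2 - a2)).PosSemidef := by
  let σ : Fin 1 ⊕ Fin 3 ≃ Fin 4 := finSumFinEquiv.trans (Equiv.swap 1 2)
  have hblocks : !![y1 - Y12, 0, 0, 0;
        0, Y12, x1 - 0, x2 - a2;
        0, x1 - 0, X11, X12;
        0, x2 - a2, X12, x2 - a2].submatrix σ σ =
      fromBlocks (diagonal fun _ ↦ y1 - Y12) 0 0
        (pivotBlock x1 X11 X12 Y12 (x2 - a2) (x2 - a2)) := by
    rw [sub_zero]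
    ext (i | i) (j | j) <;> fin_cases i <;> fin_cases j <;> rfl
  rw [P4acond, ← posSemidef_submatrix_equiv σ, hblocks, posSemidef_fromBlocks_zero_iff,
    posSemidef_diagonal_iff, forall_const]

theorem P3cond.posSemidef_pivotBlock (h : P3cond x1 x2 X11 X12 X22 y1 y2 Y12 0 a2) :
    (pivotBlock x1 x1 X12 Y12 (x2 - a2) (x2 - a2)).PosSemidef := by
  convert h.submatrix ![1, 0, 2] using 1
  rw [sub_zero]
  ext i j
  fin_cases i <;> fin_cases j <;> rfl

theorem P5cond.posSemidef_pivotBlock (h : P5cond x1 x2 X11 X12 X22 y1 y2 Y12 0 a2) :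
    (pivotBlock x1 X11 X12 Y12 (x2 - a2) X22).PosSemidef := by
  convert h.submatrix ![3, 2, 4] using 1
  rw [sub_zero]
  ext i j
  fin_cases i <;> fin_cases j <;> rfl

theorem p4acond_zero_iff_mem_Icc (hX : 0 < X11) (hθ : 0 ≤ Y12 * X11 - x1 ^ 2)
    (hk : 0 ≤ X12 * (x1 - X12)) (hy : 0 ≤ y1 - Y12) :
    P4acond x1 x2 X11 X12 X22 y1 y2 Y12 0 a2 ↔
      a2 ∈ Set.Icc (alpha2minus x1 x2 X11 X12 Y12) (alpha2plus x1 x2 X11 X12 Y12) := by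
  have hΔ : 0 ≤ (Y12 * X11 - x1 ^ 2) * (Y12 * X11 - x1 ^ 2 + 4 * (X12 * (x1 - X12))) := by
    positivity
  rw [p4acond_zero_iff, and_iff_right hy, posSemidef_pivotBlock_iff_sq_le hX hθ hk,
    sq_le_mul_add_iff_abs_le_sqrt hΔ, Set.mem_Icc, alpha2minus_le_and_le_alpha2plus_iff hX]

theorem p4acond_zero_of_X11_eq_zero (hX : X11 = 0) (hy : 0 ≤ y1 - Y12)
    (hP3 : P3cond x1 x2 X11 X12 X22 y1 y2 Y12 0 a2)
    (hP5 : P5cond x1 x2 X11 X12 X22 y1 y2 Y12 0 a2) :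
    P4acond x1 x2 X11 X12 X22 y1 y2 Y12 0 a2 := by
  have hx : x1 = 0 := by
    simpa [hX] using sq_le_of_posSemidef_pivotBlock hP5.posSemidef_pivotBlock
  refine p4acond_zero_iff.2 ⟨hy, ?_⟩
  rw [hX, ← hx]
  exact hP3.posSemidef_pivotBlock

theorem p4acond_zero_of_a2_eq_zero (ha2 : a2 = 0) (hy : 0 ≤ y1 - Y12) (hX22 : X22 ≤ x2)
    (hP5 : P5cond x1 x2 X11 X12 X22 y1 y2 Y12 0 a2) :
    P4acond x1 x2 X11 X12 X22 y1 y2 Y12 0 a2 :=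
  p4acond_zero_iff.2
    ⟨hy, posSemidef_pivotBlock_mono (by rwa [ha2, sub_zero]) hP5.posSemidef_pivotBlock⟩

end

/-- If (x, X, y, Y₁₂, α) lacks only (P4a) and α₁ = 0, then X₁₁ > 0, y₂ − Y₁₂ > 0,
and for any α̂₂, the point with α̂ = (0, α̂₂) satisfies (P4a) iff α₂⁻ ≤ α̂₂ ≤ α₂⁺. -/
theorem stmt9 (x1 x2 X11 X12 X22 y1 y2 Y12 a2 : ℝ)
    (h : LacksOnlyP4a x1 x2 X11 X12 X22 y1 y2 Y12 0 a2) :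
    0 < X11 ∧ 0 < y2 - Y12 ∧
      ∀ b2 : ℝ,
        (P4acond x1 x2 X11 X12 X22 y1 y2 Y12 0 b2 ↔
          alpha2minus x1 x2 X11 X12 Y12 ≤ b2 ∧ b2 ≤ alpha2plus x1 x2 X11 X12 Y12) := by
  obtain ⟨⟨-, -, hX22, -, hX12, hX12', -, hy1, ha2, ha2', -, -⟩, hP3, -, hP5, hP4a⟩ := h
  rw [sub_zero] at hX12'
  have hZ : 0 ≤ X12 := (le_max_left _ _).trans hX12
  have hZx : X12 ≤ x1 := hX12'.trans (min_le_left _ _)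
  have hblock := hP5.posSemidef_pivotBlock
  have hθ := sub_nonneg.2 (sq_le_of_posSemidef_pivotBlock hblock)
  have hX : 0 < X11 := (hblock.diag_nonneg (i := 0)).lt_of_ne fun hX0 ↦
    hP4a (p4acond_zero_of_X11_eq_zero hX0.symm hy1 hP3 hP5)
  have hy2 : 0 < y2 - Y12 := (ha2.trans ha2').lt_of_ne fun hy0 ↦
    hP4a (p4acond_zero_of_a2_eq_zero (ha2.antisymm' (ha2'.trans_eq hy0.symm)) hy1 hX22 hP5)
  exact ⟨hX, hy2, fun b2 ↦ p4acond_zero_iff_mem_Icc hX hθ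
    (mul_nonneg hZ (sub_nonneg.2 hZx)) hy1⟩
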